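/- Assume ∫ₐᵇ w ≠ 0 and set δ := 2 + 2‖w‖_{L¹}/|∫ₐᵇ w|. Fix l, r ∈ ℝ and set α := |l| + |r| + ‖q₋‖_{L¹}. Assume there exists a real-valued absolutely continuous function g on [a,b] with g(a) = g(b) = 0, ∫ₐᵇ p|g'|² < ∞, and g(x)w(x) > 0 a.e. on (a,b), and let ε > 0 satisfy μ_{1/p}({x ∈ [a,b] : p(x)g(x)w(x) < ε}) ≤ 1/(2αδ²). Then every λ ∈ ℂ with Im λ ≠ 0 for which there exists a solution (φ, u) of −(pφ')' + qφ = λwφ with φ not identically zero and u(a) = l·φ(a), u(b) = r·φ(b), satisfies |Im λ| ≤ (2/ε)·α^{3/2}·δ²·‖g'‖_{p,2} and |Re λ| ≤ (2/ε)·α·δ²·(√α·‖g'‖_{p,2} + (α + ‖q‖_{L¹})·‖g‖_∞). -/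

import Mathlib

open MeasureTheory Real Complex

open scoped ComplexConjugate

/-!
Pair the equation with the conjugate of `φ`. The boundary term is real, so for non-real `λ` the
imaginary part gives `∫ w|φ|² = 0`, and the real part bounds the energy `∫ |u|²/p` by `αM²`, where
`M = max |φ|`. Were `|φ|²` nearly constant, `∫ w|φ|² = 0` would contradict `∫ w ≠ 0`; hence `|φ|²`
oscillates by at least a fixed fraction of `M²`. Its oscillation is at most `2 ∫ |φ||u|/p`, and
Cauchy–Schwarz turns this into `M² ≤ αδ² ∫ |φ|²/p`: the mass of `|φ|²` cannot concentrate on the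
`μ_{1/p}`-small set where `pgw < ε`, so `T = ∫ gw|φ|²` is at least `εM² / (2αδ²)`.
Pairing with `g` times the conjugate of `φ` removes the boundary term, leaving
`λT = ∫ g (q|φ|² + |u|²/p) + ∫ g' u conj φ`. The right-hand side is of order `M²`; divide by `T`.
-/

section IntegralInequalities

variable {X : Type*} [MeasurableSpace X] {μ : Measure X}

theorem norm_integral_le_sqrt_mul_sqrt {E : Type*} [NormedAddCommGroup E] [NormedSpace ℝ E]
    {A B : X → ℝ} {F : X → E} (hA : Integrable A μ) (hB : Integrable B μ)
    (hA₀ : 0 ≤ᵐ[μ] A) (hB₀ : 0 ≤ᵐ[μ] B) (hF : ∀ᵐ x ∂μ, ‖F x‖ ^ 2 ≤ A x * B x) :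
    ‖∫ x, F x ∂μ‖ ≤ √(∫ x, A x ∂μ) * √(∫ x, B x ∂μ) := by
  have memLp_sqrt {D : X → ℝ} (hD : Integrable D μ) (hD₀ : 0 ≤ᵐ[μ] D) :
      MemLp (fun x => √(D x)) 2 μ := by
    refine (memLp_two_iff_integrable_sq
      (continuous_sqrt.comp_aestronglyMeasurable hD.aestronglyMeasurable)).2 (hD.congr ?_)
    filter_upwards [hD₀] with x hx using (sq_sqrt hx).symm
  have integral_sqrt_rpow {D : X → ℝ} (hD₀ : 0 ≤ᵐ[μ] D) :
      ∫ x, √(D x) ^ (2 : ℝ) ∂μ = ∫ x, D x ∂μ :=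
    integral_congr_ae (by filter_upwards [hD₀] with x hx; rw [rpow_two, sq_sqrt hx])
  calc ‖∫ x, F x ∂μ‖ ≤ ∫ x, √(A x) * √(B x) ∂μ := by
        refine norm_integral_le_of_norm_le
          ((memLp_sqrt hA hA₀).integrable_mul (memLp_sqrt hB hB₀)) ?_
        filter_upwards [hA₀, hF] with x hAx hFx
        rw [← sqrt_mul hAx]
        exact le_sqrt_of_sq_le hFx
    _ ≤ (∫ x, √(A x) ^ (2 : ℝ) ∂μ) ^ (1 / 2 : ℝ) * (∫ x, √(B x) ^ (2 : ℝ) ∂μ) ^ (1 / 2 : ℝ) :=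
        integral_mul_le_Lp_mul_Lq_of_nonneg HolderConjugate.two_two
          (.of_forall fun _ => sqrt_nonneg _) (.of_forall fun _ => sqrt_nonneg _)
          (by simpa using memLp_sqrt hA hA₀) (by simpa using memLp_sqrt hB hB₀)
    _ = √(∫ x, A x ∂μ) * √(∫ x, B x ∂μ) := by
        rw [integral_sqrt_rpow hA₀, integral_sqrt_rpow hB₀, sqrt_eq_rpow, sqrt_eq_rpow]

theorem setIntegral_le_of_withDensity_le [SFinite μ] {ρ : X → ℝ} {s : Set X} {c : ℝ}
    (hρ : AEStronglyMeasurable ρ (μ.restrict s)) (hρ₀ : 0 ≤ᵐ[μ.restrict s] ρ) (hc : 0 ≤ c)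
    (h : μ.withDensity (fun x => ENNReal.ofReal (ρ x)) s ≤ ENNReal.ofReal c) :
    ∫ x in s, ρ x ∂μ ≤ c := by
  rw [integral_eq_lintegral_of_nonneg_ae hρ₀ hρ, ← withDensity_apply']
  exact ENNReal.toReal_le_of_le_ofReal hc h

theorem mul_integral_sub_le_integral_mul {p f N : X → ℝ} {ε S : ℝ} (hε : 0 ≤ ε)
    (hp_pos : ∀ᵐ x ∂μ, 0 < p x) (hp : Integrable (fun x => 1 / p x) μ)
    (hf : AEMeasurable f μ) (hf₀ : 0 ≤ᵐ[μ] f) (hN : ∀ᵐ x ∂μ, 0 ≤ N x ∧ N x ≤ S)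
    (hpN : Integrable (fun x => 1 / p x * N x) μ) (hfN : Integrable (fun x => f x * N x) μ) :
    ε * (∫ x, 1 / p x * N x ∂μ - S * ∫ x in {x | p x * f x < ε}, 1 / p x ∂μ)
      ≤ ∫ x, f x * N x ∂μ := by
  have hpm : AEMeasurable p μ := by simpa using hp.aemeasurable.const_div 1
  set E := {x | p x * f x < ε}
  have hE : NullMeasurableSet E μ := nullMeasurableSet_lt (hpm.mul hf) aemeasurable_const
  rw [← integral_indicator₀ hE, ← integral_const_mul,
    ← integral_sub hpN ((hp.indicator₀ hE).const_mul S), ← integral_const_mul]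
  refine integral_mono_ae ((hpN.sub ((hp.indicator₀ hE).const_mul S)).const_mul ε) hfN ?_
  filter_upwards [hp_pos, hf₀, hN] with x hpx hfx ⟨hNx, hNS⟩
  -- On `E` the left integrand is nonpositive because `N ≤ S`; off `E`, `ε / p ≤ f`.
  by_cases hx : x ∈ E
  · rw [Set.indicator_of_mem hx]
    calc ε * (1 / p x * N x - S * (1 / p x)) = -(ε * (1 / p x) * (S - N x)) := by ring
      _ ≤ 0 := neg_nonpos.2 (mul_nonneg (by positivity) (sub_nonneg.2 hNS))
      _ ≤ f x * N x := mul_nonneg hfx hNx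
  · rw [Set.indicator_of_notMem hx, mul_zero, sub_zero, ← mul_assoc, mul_one_div]
    gcongr
    rw [div_le_iff₀ hpx, mul_comm]
    exact not_lt.1 hx

theorem le_mul_integral_mul_of_withDensity_le [SFinite μ] {p f N : X → ℝ} {ε S D : ℝ}
    (hε : 0 < ε) (hS : 0 ≤ S) (hD : 0 < D)
    (hp_pos : ∀ᵐ x ∂μ, 0 < p x) (hp : Integrable (fun x => 1 / p x) μ)
    (hf : AEMeasurable f μ) (hf₀ : 0 ≤ᵐ[μ] f) (hN : ∀ᵐ x ∂μ, 0 ≤ N x ∧ N x ≤ S)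
    (hpN : Integrable (fun x => 1 / p x * N x) μ) (hfN : Integrable (fun x => f x * N x) μ)
    (hSD : S ≤ D * ∫ x, 1 / p x * N x ∂μ)
    (h_small : μ.withDensity (fun x => ENNReal.ofReal (1 / p x)) {x | p x * f x < ε}
      ≤ ENNReal.ofReal (1 / (2 * D))) :
    S ≤ 2 / ε * D * ∫ x, f x * N x ∂μ := by
  have h_tail : ∫ x in {x | p x * f x < ε}, 1 / p x ∂μ ≤ 1 / (2 * D) :=
    setIntegral_le_of_withDensity_le hp.aestronglyMeasurable.restrict
      (ae_restrict_of_ae (hp_pos.mono fun x hx => (one_div_pos.2 hx).le)) (by positivity) h_small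
  have h_lower := mul_integral_sub_le_integral_mul hε.le hp_pos hp hf hf₀ hN hpN hfN
  calc S = 2 / ε * D * (ε * (S / D - S * (1 / (2 * D)))) := by field_simp; ring
    _ ≤ 2 / ε * D * (ε * (∫ x, 1 / p x * N x ∂μ
          - S * ∫ x in {x | p x * f x < ε}, 1 / p x ∂μ)) := by
        gcongr
        exact (div_le_iff₀' hD).2 hSD
    _ ≤ 2 / ε * D * ∫ x, f x * N x ∂μ := by gcongr

theorem norm_intervalIntegral_le_sqrt_mul_sqrt {E : Type*} [NormedAddCommGroup E]
    [NormedSpace ℝ E] {a b : ℝ} (hab : a ≤ b) {A B : ℝ → ℝ} {F : ℝ → E}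
    (hA : IntervalIntegrable A volume a b) (hB : IntervalIntegrable B volume a b)
    (h : ∀ᵐ x ∂(volume.restrict (Set.Ioc a b)), 0 ≤ A x ∧ 0 ≤ B x ∧ ‖F x‖ ^ 2 ≤ A x * B x) :
    ‖∫ x in a..b, F x‖ ≤ √(∫ x in a..b, A x) * √(∫ x in a..b, B x) := by
  simp only [intervalIntegral.integral_of_le hab]
  exact norm_integral_le_sqrt_mul_sqrt hA.1 hB.1 (h.mono fun _ hx => hx.1)
    (h.mono fun _ hx => hx.2.1) (h.mono fun _ hx => hx.2.2)

theorem abs_mul_abs_integral_le_of_integral_mul_eq_zero {a b c C : ℝ} (hab : a ≤ b)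
    {w N : ℝ → ℝ} (hw : IntervalIntegrable w volume a b)
    (hwN : IntervalIntegrable (fun x => w x * N x) volume a b)
    (hwN₀ : ∫ x in a..b, w x * N x = 0) (hN : ∀ x ∈ Set.Icc a b, |c - N x| ≤ C) :
    |c| * |∫ x in a..b, w x| ≤ (∫ x in a..b, |w x|) * C := by
  have h_eq : c * ∫ x in a..b, w x = ∫ x in a..b, w x * (c - N x) := by
    simp only [mul_sub]
    rw [intervalIntegral.integral_sub (hw.mul_const c) hwN, hwN₀, sub_zero,
      intervalIntegral.integral_mul_const, mul_comm]
  rw [← abs_mul, h_eq, ← intervalIntegral.integral_mul_const, ← norm_eq_abs]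
  refine intervalIntegral.norm_integral_le_of_norm_le hab (.of_forall fun x hx => ?_)
    (hw.abs.mul_const C)
  rw [norm_mul, norm_eq_abs, norm_eq_abs]
  gcongr
  exact hN x (Set.Ioc_subset_Icc_self hx)

theorem le_mul_intervalIntegral_mul_of_withDensity_le {a b ε S D : ℝ} (hab : a ≤ b)
    {p g w N : ℝ → ℝ} (hε : 0 < ε) (hS : 0 ≤ S) (hD : 0 < D)
    (hp_pos : ∀ᵐ x ∂(volume.restrict (Set.Ioc a b)), 0 < p x)
    (hp : IntervalIntegrable (fun x => 1 / p x) volume a b)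
    (hw : IntervalIntegrable w volume a b) (hg : ContinuousOn g (Set.uIcc a b))
    (hgw : ∀ᵐ x ∂(volume.restrict (Set.Ioc a b)), 0 ≤ g x * w x)
    (hN_cont : ContinuousOn N (Set.uIcc a b)) (hN : ∀ x ∈ Set.Icc a b, 0 ≤ N x ∧ N x ≤ S)
    (hSD : S ≤ D * ∫ x in a..b, 1 / p x * N x)
    (h_small : (volume.withDensity fun x => ENNReal.ofReal (1 / p x))
      {x | x ∈ Set.Icc a b ∧ p x * g x * w x < ε} ≤ ENNReal.ofReal (1 / (2 * D))) :
    S ≤ 2 / ε * D * ∫ x in a..b, g x * (w x * N x) := by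
  have hgw_int : IntervalIntegrable (fun x => g x * w x) volume a b := hw.continuousOn_mul hg
  simp only [intervalIntegral.integral_of_le hab, ← mul_assoc (g _)] at hSD ⊢
  refine le_mul_integral_mul_of_withDensity_le hε hS hD hp_pos hp.1
    hgw_int.1.aestronglyMeasurable.aemeasurable hgw ?_ (hp.mul_continuousOn hN_cont).1
    (hgw_int.mul_continuousOn hN_cont).1 hSD (le_trans ?_ h_small)
  · filter_upwards [ae_restrict_mem measurableSet_Ioc] with x hx
      using hN x (Set.Ioc_subset_Icc_self hx)
  · rw [withDensity_apply', withDensity_apply', Measure.restrict_restrict' measurableSet_Ioc]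
    refine lintegral_mono_set fun x hx => ⟨Set.Ioc_subset_Icc_self hx.2, ?_⟩
    simpa only [Set.mem_ofPred_eq, mul_assoc] using hx.1

theorem exists_ne_zero_forall_norm_le {X E : Type*} [TopologicalSpace X] [NormedAddCommGroup E]
    {s : Set X} {F : X → E} (hs : IsCompact s) (hF : ContinuousOn F s) (hne : ∃ x ∈ s, F x ≠ 0) :
    ∃ x₀ ∈ s, F x₀ ≠ 0 ∧ ∀ x ∈ s, ‖F x‖ ≤ ‖F x₀‖ := by
  obtain ⟨y, hy, hFy⟩ := hne
  obtain ⟨x₀, hx₀, hmax⟩ := hs.exists_isMaxOn ⟨y, hy⟩ hF.norm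
  exact ⟨x₀, hx₀, norm_pos_iff.1 ((norm_pos_iff.2 hFy).trans_le (hmax hy)), hmax⟩

theorem intervalIntegral_one_div_mul_norm_sq_nonneg {E : Type*} [NormedAddCommGroup E] {a b : ℝ}
    (hab : a ≤ b) {p : ℝ → ℝ} (hp_pos : ∀ᵐ x ∂(volume.restrict (Set.Ioc a b)), 0 < p x)
    (f : ℝ → E) : 0 ≤ ∫ x in a..b, 1 / p x * ‖f x‖ ^ 2 := by
  rw [intervalIntegral.integral_of_le hab]
  refine setIntegral_nonneg_of_ae_restrict ?_
  filter_upwards [hp_pos] with x hpx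
  positivity

theorem neg_integral_mul_le_integral_abs_min_mul {a b S : ℝ} (hab : a ≤ b) {q N : ℝ → ℝ}
    (hq : IntervalIntegrable q volume a b)
    (hqN : IntervalIntegrable (fun x => q x * N x) volume a b)
    (hN : ∀ x ∈ Set.Icc a b, 0 ≤ N x ∧ N x ≤ S) :
    -∫ x in a..b, q x * N x ≤ (∫ x in a..b, |min (q x) 0|) * S := by
  have hq_neg : IntervalIntegrable (fun x => |min (q x) 0|) volume a b :=
    .abs ⟨hq.1.inf (integrable_zero _ _ _), hq.2.inf (integrable_zero _ _ _)⟩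
  rw [← intervalIntegral.integral_neg, ← intervalIntegral.integral_mul_const]
  refine intervalIntegral.integral_mono_on hab hqN.neg (hq_neg.mul_const S) fun x hx => ?_
  have hq_le : -q x ≤ |min (q x) 0| :=
    (neg_le_neg (min_le_left (q x) 0)).trans (neg_le_abs _)
  calc -(q x * N x) = -q x * N x := by ring
    _ ≤ |min (q x) 0| * S :=
        mul_le_mul hq_le (hN x hx).2 (hN x hx).1 (abs_nonneg _)

theorem abs_le_mul_of_le_mul {K : Type*} [Field K] [LinearOrder K] [IsStrictOrderedRing K]
    {y T m c X : K} (hm : 0 < m) (hc : 0 < c) (hX : 0 ≤ X) (hmT : m ≤ c * T)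
    (hy : |y * T| ≤ m * X) : |y| ≤ c * X := by
  have hT : 0 < T := pos_of_mul_pos_right (hm.trans_le hmT) hc.le
  refine le_of_mul_le_mul_right ?_ hT
  calc |y| * T = |y * T| := by rw [abs_mul, abs_of_pos hT]
    _ ≤ m * X := hy
    _ ≤ c * T * X := by gcongr
    _ = c * X * T := by ring

end IntegralInequalities

theorem intervalIntegrable_ofReal {f : ℝ → ℝ} {a b : ℝ} (hf : IntervalIntegrable f volume a b) :
    IntervalIntegrable (fun x => (f x : ℂ)) volume a b :=
  ⟨hf.1.ofReal, hf.2.ofReal⟩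

/-- `F` is absolutely continuous on the interval with endpoints `a`, `b`, in either order, with a.e.
derivative `f`. This is encoded by the integral equation, and integrability of `f` is part of the
definition because the Bochner integral of a non-integrable function is `0`. It lets products of
solutions be integrated by parts although no function here is differentiable everywhere. -/
structure IsPrimitiveOn {E : Type*} [NormedAddCommGroup E] [NormedSpace ℝ E]
    (F f : ℝ → E) (a b : ℝ) : Prop where
  intervalIntegrable : IntervalIntegrable f volume a b
  eq_add_integral : ∀ x ∈ Set.uIcc a b, F x = F a + ∫ t in a..x, f t

theorem absolutelyContinuousOnInterval_of_dist_le {X Y : Type*} [PseudoMetricSpace X]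
    [PseudoMetricSpace Y] {F : ℝ → X} {G : ℝ → Y} {a b : ℝ}
    (hG : AbsolutelyContinuousOnInterval G a b)
    (h : ∀ x ∈ Set.uIcc a b, ∀ y ∈ Set.uIcc a b, dist (F x) (F y) ≤ dist (G x) (G y)) :
    AbsolutelyContinuousOnInterval F a b := by
  rw [absolutelyContinuousOnInterval_iff] at hG ⊢
  intro ε hε
  obtain ⟨η, hη, hGη⟩ := hG ε hε
  refine ⟨η, hη, fun I hI hlt => lt_of_le_of_lt (Finset.sum_le_sum fun i hi => ?_) (hGη I hI hlt)⟩
  obtain ⟨hi₁, hi₂⟩ := hI.1 i hi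
  exact h _ hi₁ _ hi₂

namespace IsPrimitiveOn

variable {E : Type*} [NormedAddCommGroup E] [NormedSpace ℝ E] {F f : ℝ → E} {a b : ℝ}

theorem const (c : E) : IsPrimitiveOn (fun _ => c) (fun _ => 0) a b :=
  ⟨intervalIntegrable_const, by simp⟩

theorem intervalIntegrable_of_mem (hF : IsPrimitiveOn F f a b) {x y : ℝ}
    (hx : x ∈ Set.uIcc a b) (hy : y ∈ Set.uIcc a b) : IntervalIntegrable f volume x y :=
  hF.intervalIntegrable.mono_set (Set.uIcc_subset_uIcc hx hy)

theorem integral_eq_sub (hF : IsPrimitiveOn F f a b) {x y : ℝ}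
    (hx : x ∈ Set.uIcc a b) (hy : y ∈ Set.uIcc a b) : ∫ t in x..y, f t = F y - F x := by
  rw [hF.eq_add_integral x hx, hF.eq_add_integral y hy, add_sub_add_left_eq_sub,
    intervalIntegral.integral_interval_sub_left
      (hF.intervalIntegrable_of_mem Set.left_mem_uIcc hy)
      (hF.intervalIntegrable_of_mem Set.left_mem_uIcc hx)]

theorem clm_comp [CompleteSpace E] {G : Type*} [NormedAddCommGroup G] [NormedSpace ℝ G]
    [CompleteSpace G] (L : E →L[ℝ] G) (hF : IsPrimitiveOn F f a b) :
    IsPrimitiveOn (fun x => L (F x)) (fun x => L (f x)) a b where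
  intervalIntegrable :=
    ⟨L.integrable_comp hF.intervalIntegrable.1, L.integrable_comp hF.intervalIntegrable.2⟩
  eq_add_integral x hx := by
    rw [L.intervalIntegral_comp_comm (hF.intervalIntegrable_of_mem Set.left_mem_uIcc hx),
      ← map_add, ← hF.eq_add_integral x hx]

theorem absolutelyContinuousOnInterval (hF : IsPrimitiveOn F f a b) :
    AbsolutelyContinuousOnInterval F a b := by
  have hf := hF.intervalIntegrable.norm
  refine absolutelyContinuousOnInterval_of_dist_le
    (hf.absolutelyContinuousOnInterval_intervalIntegral Set.left_mem_uIcc) fun x hx y hy => ?_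
  have hsub {z : ℝ} (hz : z ∈ Set.uIcc a b) : IntervalIntegrable (fun t => ‖f t‖) volume a z :=
    hf.mono_set (Set.uIcc_subset_uIcc_left hz)
  rw [dist_comm, dist_comm (∫ v in a..x, _), dist_eq_norm, dist_eq_norm, ← hF.integral_eq_sub hx hy,
    intervalIntegral.integral_interval_sub_left (hsub hy) (hsub hx)]
  exact intervalIntegral.norm_integral_le_abs_integral_norm

protected theorem continuousOn (hF : IsPrimitiveOn F f a b) : ContinuousOn F (Set.uIcc a b) :=
  hF.absolutelyContinuousOnInterval.continuousOn

theorem continuousOn_norm_sq (hF : IsPrimitiveOn F f a b) :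
    ContinuousOn (fun x => ‖F x‖ ^ 2) (Set.uIcc a b) :=
  hF.continuousOn.norm.pow 2

theorem ae_hasDerivAt [CompleteSpace E] (hF : IsPrimitiveOn F f a b) :
    ∀ᵐ x, x ∈ Set.uIcc a b → HasDerivAt F (f x) x := by
  filter_upwards [hF.intervalIntegrable.ae_hasDerivAt_integral,
    (Set.toFinite {min a b, max a b}).countable.ae_notMem volume] with x hderiv hne hx
  have hx_nhds : Set.uIcc a b ∈ nhds x := by
    simp only [Set.mem_insert_iff, Set.mem_singleton_iff, not_or] at hne
    exact Icc_mem_nhds (lt_of_le_of_ne hx.1 (Ne.symm hne.1)) (lt_of_le_of_ne hx.2 hne.2)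
  exact ((hderiv hx a Set.left_mem_uIcc).const_add (F a)).congr_of_eventuallyEq
    (Filter.mem_of_superset hx_nhds hF.eq_add_integral)

theorem of_absolutelyContinuousOnInterval [CompleteSpace E]
    (hF : AbsolutelyContinuousOnInterval F a b) (hf : IntervalIntegrable f volume a b)
    (hderiv : ∀ᵐ x, x ∈ Set.uIcc a b → HasDerivAt F (f x) x) : IsPrimitiveOn F f a b := by
  refine ⟨hf, fun x hx => ?_⟩
  have hI : IsPrimitiveOn (fun x => ∫ t in a..x, f t) f a b := ⟨hf, by simp⟩
  obtain ⟨C, hC⟩ := (hF.fun_sub hI.absolutelyContinuousOnInterval).const_of_ae_hasDerivAt_zero (by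
    filter_upwards [hderiv, hI.ae_hasDerivAt] with y hFy hIy hy
    simpa using! (hFy hy).sub (hIy hy))
  have hCa := hC a Set.left_mem_uIcc
  have hCx := hC x hx
  rw [intervalIntegral.integral_same, sub_zero] at hCa
  rw [hCa, ← hCx, sub_add_cancel]

theorem mul {A : Type*} [NormedRing A] [NormMulClass A] [NormedAlgebra ℝ A] [CompleteSpace A]
    {F f G g : ℝ → A} (hF : IsPrimitiveOn F f a b) (hG : IsPrimitiveOn G g a b) :
    IsPrimitiveOn (fun x => F x * G x) (fun x => f x * G x + F x * g x) a b := by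
  refine of_absolutelyContinuousOnInterval
    (hF.absolutelyContinuousOnInterval.fun_smul hG.absolutelyContinuousOnInterval)
    ((hF.intervalIntegrable.mul_continuousOn hG.continuousOn).add
      (hG.intervalIntegrable.continuousOn_mul hF.continuousOn)) ?_
  filter_upwards [hF.ae_hasDerivAt, hG.ae_hasDerivAt] with x hFx hGx hx
  exact (hFx hx).fun_mul (hGx hx)

theorem norm_sq {E : Type*} [NormedAddCommGroup E] [InnerProductSpace ℝ E] [CompleteSpace E]
    {F f : ℝ → E} (hF : IsPrimitiveOn F f a b) :
    IsPrimitiveOn (fun x => ‖F x‖ ^ 2) (fun x => 2 * inner ℝ (F x) (f x)) a b := by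
  have hF_norm : AbsolutelyContinuousOnInterval (fun x => ‖F x‖) a b :=
    absolutelyContinuousOnInterval_of_dist_le hF.absolutelyContinuousOnInterval
      fun x _ y _ => (dist_norm_norm_le (F x) (F y)).trans_eq (dist_eq_norm _ _).symm
  refine of_absolutelyContinuousOnInterval (by simpa [sq] using hF_norm.fun_smul hF_norm)
    (IntervalIntegrable.const_mul ?_ 2) ?_
  · refine (hF.intervalIntegrable.norm.continuousOn_mul hF.continuousOn.norm).mono_fun' ?_
      (.of_forall fun x => norm_inner_le_norm (F x) (f x))
    exact ((hF.continuousOn.mono Set.uIoc_subset_uIcc).aestronglyMeasurable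
      measurableSet_uIoc).inner hF.intervalIntegrable.def'.aestronglyMeasurable
  · filter_upwards [hF.ae_hasDerivAt] with x hFx hx using (hFx hx).norm_sq

theorem abs_norm_sq_sub_norm_sq_le {E : Type*} [NormedAddCommGroup E] [InnerProductSpace ℝ E]
    [CompleteSpace E] {F f : ℝ → E} (hab : a ≤ b) (hF : IsPrimitiveOn F f a b) {x y : ℝ}
    (hx : x ∈ Set.Icc a b) (hy : y ∈ Set.Icc a b) :
    |‖F x‖ ^ 2 - ‖F y‖ ^ 2| ≤ 2 * ∫ t in a..b, ‖F t‖ * ‖f t‖ := by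
  have hFf : IntervalIntegrable (fun t => 2 * (‖F t‖ * ‖f t‖)) volume a b :=
    (hF.intervalIntegrable.norm.continuousOn_mul hF.continuousOn.norm).const_mul 2
  rw [← Set.uIcc_of_le hab] at hx hy
  rw [← hF.norm_sq.integral_eq_sub hy hx, ← norm_eq_abs, ← intervalIntegral.integral_const_mul]
  calc ‖∫ t in y..x, 2 * inner ℝ (F t) (f t)‖
      ≤ |∫ t in y..x, 2 * (‖F t‖ * ‖f t‖)| := by
        refine intervalIntegral.norm_integral_le_abs_of_norm_le (.of_forall fun t => ?_)
          (hFf.mono_set (Set.uIcc_subset_uIcc hy hx))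
        rw [norm_mul, norm_two]
        gcongr
        exact norm_inner_le_norm (F t) (f t)
    _ ≤ |∫ t in a..b, 2 * (‖F t‖ * ‖f t‖)| :=
        intervalIntegral.abs_integral_mono_interval
          (Set.uIoc_subset_uIoc_of_uIcc_subset_uIcc (Set.uIcc_subset_uIcc hy hx))
          (.of_forall fun t => by positivity) hFf
    _ = ∫ t in a..b, 2 * (‖F t‖ * ‖f t‖) :=
        abs_of_nonneg (intervalIntegral.integral_nonneg hab fun t _ => by positivity)

end IsPrimitiveOn

/-- `φ` solves the Sturm–Liouville equation `-(pφ')' + qφ = λwφ` in the Carathéodory sense, with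
quasi-derivative `u = pφ'`. The equation is encoded as a first-order system for the pair `(φ, u)`,
so that `p` need not be differentiable. -/
structure IsSturmLiouvilleSolution (p q w : ℝ → ℝ) (lam : ℂ) (a b : ℝ) (φ u : ℝ → ℂ) :
    Prop where
  isPrimitiveOn : IsPrimitiveOn φ (fun t => u t / (p t : ℂ)) a b
  isPrimitiveOn_quasiDeriv :
    IsPrimitiveOn u (fun t => ((q t : ℂ) - lam * (w t : ℂ)) * φ t) a b

namespace IsSturmLiouvilleSolution

variable {p q w : ℝ → ℝ} {lam : ℂ} {a b : ℝ} {φ u : ℝ → ℂ}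

theorem of_continuousOn (hp : IntervalIntegrable (fun t => 1 / p t) volume a b)
    (hq : IntervalIntegrable q volume a b) (hw : IntervalIntegrable w volume a b)
    (hφ : ContinuousOn φ (Set.uIcc a b)) (hu : ContinuousOn u (Set.uIcc a b))
    (hφ_eq : ∀ x ∈ Set.uIcc a b, φ x = φ a + ∫ t in a..x, u t / (p t : ℂ))
    (hu_eq : ∀ x ∈ Set.uIcc a b,
      u x = u a + ∫ t in a..x, ((q t : ℂ) - lam * (w t : ℂ)) * φ t) :
    IsSturmLiouvilleSolution p q w lam a b φ u where
  isPrimitiveOn :=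
    ⟨by simpa [div_eq_mul_inv] using (intervalIntegrable_ofReal hp).continuousOn_mul hu, hφ_eq⟩
  isPrimitiveOn_quasiDeriv :=
    ⟨((intervalIntegrable_ofReal hq).sub
      ((intervalIntegrable_ofReal hw).const_mul lam)).mul_continuousOn hφ, hu_eq⟩

theorem isPrimitiveOn_mul_conj (h : IsSturmLiouvilleSolution p q w lam a b φ u) :
    IsPrimitiveOn (fun t => u t * conj (φ t))
      (fun t => ((q t * ‖φ t‖ ^ 2 + 1 / p t * ‖u t‖ ^ 2 : ℝ) : ℂ)
        - lam * ((w t * ‖φ t‖ ^ 2 : ℝ) : ℂ)) a b := by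
  convert! h.isPrimitiveOn_quasiDeriv.mul
    (h.isPrimitiveOn.clm_comp conjCLE.toContinuousLinearMap) using 1
  ext t
  have hφφ : φ t * conj (φ t) = ((‖φ t‖ ^ 2 : ℝ) : ℂ) := by
    rw [mul_conj, normSq_eq_norm_sq]
  have huu : u t * conj (u t / (p t : ℂ)) = ((1 / p t * ‖u t‖ ^ 2 : ℝ) : ℂ) := by
    rw [map_div₀, conj_ofReal, ← mul_div_assoc, mul_conj, normSq_eq_norm_sq, one_div_mul_eq_div,
      ofReal_div]
  calc ((q t * ‖φ t‖ ^ 2 + 1 / p t * ‖u t‖ ^ 2 : ℝ) : ℂ) - lam * ((w t * ‖φ t‖ ^ 2 : ℝ) : ℂ)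
      = ((q t : ℂ) - lam * (w t : ℂ)) * (φ t * conj (φ t)) + u t * conj (u t / (p t : ℂ)) := by
        rw [hφφ, huu]; push_cast; ring
    _ = _ := by rw [mul_assoc]; rfl

theorem energy_identity (h : IsSturmLiouvilleSolution p q w lam a b φ u)
    (hp : IntervalIntegrable (fun t => 1 / p t) volume a b)
    (hq : IntervalIntegrable q volume a b) (hw : IntervalIntegrable w volume a b)
    {g g' : ℝ → ℝ} (hg : IsPrimitiveOn g g' a b) :
    u b * conj (φ b) * g b - u a * conj (φ a) * g a
      = ((∫ t in a..b, g t * (q t * ‖φ t‖ ^ 2 + 1 / p t * ‖u t‖ ^ 2) : ℝ) : ℂ)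
        - lam * ((∫ t in a..b, g t * (w t * ‖φ t‖ ^ 2) : ℝ) : ℂ)
        + ∫ t in a..b, u t * conj (φ t) * g' t := by
  have hφ := h.isPrimitiveOn.continuousOn_norm_sq
  have hu := h.isPrimitiveOn_quasiDeriv.continuousOn_norm_sq
  have h_energy : IntervalIntegrable
      (fun t => ((g t * (q t * ‖φ t‖ ^ 2 + 1 / p t * ‖u t‖ ^ 2) : ℝ) : ℂ)) volume a b :=
    intervalIntegrable_ofReal
      (((hq.mul_continuousOn hφ).add (hp.mul_continuousOn hu)).continuousOn_mul hg.continuousOn)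
  have h_mass : IntervalIntegrable (fun t => lam * ((g t * (w t * ‖φ t‖ ^ 2) : ℝ) : ℂ))
      volume a b :=
    (intervalIntegrable_ofReal
      ((hw.mul_continuousOn hφ).continuousOn_mul hg.continuousOn)).const_mul lam
  have h_cross : IntervalIntegrable (fun t => u t * conj (φ t) * g' t) volume a b :=
    (intervalIntegrable_ofReal hg.intervalIntegrable).continuousOn_mul
      h.isPrimitiveOn_mul_conj.continuousOn
  have h_sub := (h.isPrimitiveOn_mul_conj.mul (hg.clm_comp ofRealCLM)).integral_eq_sub
    Set.left_mem_uIcc Set.right_mem_uIcc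
  simp only [ofRealCLM_apply] at h_sub
  rw [← h_sub, ← intervalIntegral.integral_ofReal, ← intervalIntegral.integral_ofReal,
    ← intervalIntegral.integral_const_mul, ← intervalIntegral.integral_sub h_energy h_mass,
    ← intervalIntegral.integral_add (h_energy.sub h_mass) h_cross]
  congr 1 with t
  push_cast
  ring

section RealBoundaryTerm

variable {B : ℝ}

theorem energy_eq_of_boundaryTerm_eq_ofReal (h : IsSturmLiouvilleSolution p q w lam a b φ u)
    (hp : IntervalIntegrable (fun t => 1 / p t) volume a b)
    (hq : IntervalIntegrable q volume a b) (hw : IntervalIntegrable w volume a b)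
    (hB : u b * conj (φ b) - u a * conj (φ a) = B) :
    (B : ℂ) = ((∫ t in a..b, (q t * ‖φ t‖ ^ 2 + 1 / p t * ‖u t‖ ^ 2) : ℝ) : ℂ)
      - lam * ((∫ t in a..b, w t * ‖φ t‖ ^ 2 : ℝ) : ℂ) := by
  simpa [hB] using h.energy_identity hp hq hw (.const 1)

theorem integral_weight_mul_norm_sq_eq_zero (h : IsSturmLiouvilleSolution p q w lam a b φ u)
    (hp : IntervalIntegrable (fun t => 1 / p t) volume a b)
    (hq : IntervalIntegrable q volume a b) (hw : IntervalIntegrable w volume a b)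
    (hlam : lam.im ≠ 0) (hB : u b * conj (φ b) - u a * conj (φ a) = B) :
    ∫ t in a..b, w t * ‖φ t‖ ^ 2 = 0 := by
  have h_im := congrArg Complex.im (h.energy_eq_of_boundaryTerm_eq_ofReal hp hq hw hB)
  simp only [ofReal_im, sub_im, im_mul_ofReal, zero_sub, zero_eq_neg, mul_eq_zero] at h_im
  exact h_im.resolve_left hlam

theorem integral_norm_quasiDeriv_sq_eq (h : IsSturmLiouvilleSolution p q w lam a b φ u)
    (hp : IntervalIntegrable (fun t => 1 / p t) volume a b)
    (hq : IntervalIntegrable q volume a b) (hw : IntervalIntegrable w volume a b)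
    (hlam : lam.im ≠ 0) (hB : u b * conj (φ b) - u a * conj (φ a) = B) :
    ∫ t in a..b, 1 / p t * ‖u t‖ ^ 2 = B - ∫ t in a..b, q t * ‖φ t‖ ^ 2 := by
  have h_energy := h.energy_eq_of_boundaryTerm_eq_ofReal hp hq hw hB
  rw [h.integral_weight_mul_norm_sq_eq_zero hp hq hw hlam hB, ofReal_zero, mul_zero, sub_zero,
    ofReal_inj, intervalIntegral.integral_add
      (hq.mul_continuousOn (h.isPrimitiveOn.continuousOn_norm_sq))
      (hp.mul_continuousOn (h.isPrimitiveOn_quasiDeriv.continuousOn_norm_sq))] at h_energy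
  exact eq_sub_of_add_eq' h_energy.symm

theorem integral_norm_quasiDeriv_sq_le (h : IsSturmLiouvilleSolution p q w lam a b φ u)
    (hab : a ≤ b) (hp : IntervalIntegrable (fun t => 1 / p t) volume a b)
    (hq : IntervalIntegrable q volume a b) (hw : IntervalIntegrable w volume a b)
    (hlam : lam.im ≠ 0) (hB : u b * conj (φ b) - u a * conj (φ a) = B) {β M : ℝ}
    (hBβ : B ≤ β * M ^ 2) (hM : ∀ x ∈ Set.Icc a b, ‖φ x‖ ≤ M) :
    ∫ t in a..b, 1 / p t * ‖u t‖ ^ 2 ≤ (β + ∫ t in a..b, |min (q t) 0|) * M ^ 2 := by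
  have hq_neg := neg_integral_mul_le_integral_abs_min_mul (S := M ^ 2) hab hq
    (hq.mul_continuousOn h.isPrimitiveOn.continuousOn_norm_sq)
    fun x hx => ⟨by positivity, by gcongr; exact hM x hx⟩
  rw [h.integral_norm_quasiDeriv_sq_eq hp hq hw hlam hB, add_mul]
  linarith

end RealBoundaryTerm

theorem integral_norm_mul_norm_deriv_le (h : IsSturmLiouvilleSolution p q w lam a b φ u)
    (hab : a ≤ b) (hp_pos : ∀ᵐ x ∂(volume.restrict (Set.Ioc a b)), 0 < p x)
    (hp : IntervalIntegrable (fun t => 1 / p t) volume a b) :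
    ∫ t in a..b, ‖φ t‖ * ‖u t / (p t : ℂ)‖
      ≤ √(∫ t in a..b, 1 / p t * ‖φ t‖ ^ 2) * √(∫ t in a..b, 1 / p t * ‖u t‖ ^ 2) := by
  refine (le_norm_self _).trans (norm_intervalIntegral_le_sqrt_mul_sqrt hab
    (hp.mul_continuousOn h.isPrimitiveOn.continuousOn_norm_sq)
    (hp.mul_continuousOn h.isPrimitiveOn_quasiDeriv.continuousOn_norm_sq) ?_)
  filter_upwards [hp_pos] with x hpx
  refine ⟨by positivity, by positivity, le_of_eq ?_⟩
  rw [norm_mul, norm_norm, norm_norm, norm_div, Complex.norm_of_nonneg hpx.le]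
  ring

theorem norm_sq_le_mul_integral_norm_sq (h : IsSturmLiouvilleSolution p q w lam a b φ u)
    (hab : a ≤ b) (hp_pos : ∀ᵐ x ∂(volume.restrict (Set.Ioc a b)), 0 < p x)
    (hp : IntervalIntegrable (fun t => 1 / p t) volume a b)
    (hw : IntervalIntegrable w volume a b) (hw₀ : ∫ t in a..b, w t ≠ 0)
    (hwφ : ∫ t in a..b, w t * ‖φ t‖ ^ 2 = 0) {α δ x₀ : ℝ}
    (hδ : 2 * (∫ t in a..b, |w t|) / |∫ t in a..b, w t| ≤ δ)
    (hx₀ : x₀ ∈ Set.Icc a b) (hφ₀ : φ x₀ ≠ 0)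
    (hα : ∫ t in a..b, 1 / p t * ‖u t‖ ^ 2 ≤ α * ‖φ x₀‖ ^ 2) :
    ‖φ x₀‖ ^ 2 ≤ α * δ ^ 2 * ∫ t in a..b, 1 / p t * ‖φ t‖ ^ 2 := by
  set J := ∫ t in a..b, 1 / p t * ‖φ t‖ ^ 2
  set K := ∫ t in a..b, 1 / p t * ‖u t‖ ^ 2
  set R := ∫ t in a..b, ‖φ t‖ * ‖u t / (p t : ℂ)‖
  have hJ : 0 ≤ J := intervalIntegral_one_div_mul_norm_sq_nonneg hab hp_pos φ
  have hK : 0 ≤ K := intervalIntegral_one_div_mul_norm_sq_nonneg hab hp_pos u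
  have hR : 0 ≤ R := intervalIntegral.integral_nonneg hab fun t _ => by positivity
  have hδ₀ : 0 ≤ δ := by
    refine le_trans (div_nonneg (mul_nonneg zero_le_two ?_) (abs_nonneg _)) hδ
    exact intervalIntegral.integral_nonneg hab fun t _ => abs_nonneg (w t)
  have h_osc : ‖φ x₀‖ ^ 2 * |∫ t in a..b, w t| ≤ (∫ t in a..b, |w t|) * (2 * R) := by
    rw [← abs_sq ‖φ x₀‖]
    exact abs_mul_abs_integral_le_of_integral_mul_eq_zero hab hw
      (hw.mul_continuousOn h.isPrimitiveOn.continuousOn_norm_sq) hwφ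
      fun x hx => h.isPrimitiveOn.abs_norm_sq_sub_norm_sq_le hab hx₀ hx
  have h_le : ‖φ x₀‖ ^ 2 ≤ δ * (√J * √K) := by
    calc ‖φ x₀‖ ^ 2 ≤ (∫ t in a..b, |w t|) * (2 * R) / |∫ t in a..b, w t| :=
          (le_div_iff₀ (abs_pos.2 hw₀)).2 h_osc
      _ = 2 * (∫ t in a..b, |w t|) / |∫ t in a..b, w t| * R := by ring
      _ ≤ δ * R := by gcongr
      _ ≤ δ * (√J * √K) := by
          gcongr
          exact h.integral_norm_mul_norm_deriv_le hab hp_pos hp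
  refine le_of_mul_le_mul_right ?_ (pow_pos (norm_pos_iff.2 hφ₀) 2)
  calc ‖φ x₀‖ ^ 2 * ‖φ x₀‖ ^ 2 ≤ δ * (√J * √K) * (δ * (√J * √K)) :=
        mul_self_le_mul_self (sq_nonneg _) h_le
    _ = δ ^ 2 * J * K := by
        rw [← sq, mul_pow, mul_pow, sq_sqrt hJ, sq_sqrt hK, mul_assoc]
    _ ≤ δ ^ 2 * J * (α * ‖φ x₀‖ ^ 2) := by gcongr
    _ = α * δ ^ 2 * J * ‖φ x₀‖ ^ 2 := by ring

theorem norm_integral_mul_conj_mul_le (h : IsSturmLiouvilleSolution p q w lam a b φ u)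
    (hab : a ≤ b) (hp_pos : ∀ᵐ x ∂(volume.restrict (Set.Ioc a b)), 0 < p x)
    (hp : IntervalIntegrable (fun t => 1 / p t) volume a b) {α M : ℝ} (hM₀ : 0 ≤ M)
    (hM : ∀ x ∈ Set.Icc a b, ‖φ x‖ ≤ M)
    (hα : ∫ t in a..b, 1 / p t * ‖u t‖ ^ 2 ≤ α * M ^ 2) {g' : ℝ → ℝ}
    (hg' : IntervalIntegrable (fun t => p t * g' t ^ 2) volume a b) :
    ‖∫ t in a..b, u t * conj (φ t) * g' t‖ ≤ M ^ 2 * (√α * √(∫ t in a..b, p t * g' t ^ 2)) := by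
  calc ‖∫ t in a..b, u t * conj (φ t) * g' t‖
      ≤ √(∫ t in a..b, 1 / p t * ‖u t‖ ^ 2) * √(∫ t in a..b, M ^ 2 * (p t * g' t ^ 2)) := by
        refine norm_intervalIntegral_le_sqrt_mul_sqrt hab
          (hp.mul_continuousOn h.isPrimitiveOn_quasiDeriv.continuousOn_norm_sq)
          (hg'.const_mul _) ?_
        filter_upwards [hp_pos, ae_restrict_mem measurableSet_Ioc] with x hpx hx
        refine ⟨by positivity, by positivity, ?_⟩
        have hφx := hM x (Set.Ioc_subset_Icc_self hx)
        rw [norm_mul, norm_mul, RCLike.norm_conj, norm_real, norm_eq_abs, mul_pow, mul_pow, sq_abs]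
        calc ‖u x‖ ^ 2 * ‖φ x‖ ^ 2 * g' x ^ 2 ≤ ‖u x‖ ^ 2 * M ^ 2 * g' x ^ 2 := by gcongr
          _ = 1 / p x * ‖u x‖ ^ 2 * (M ^ 2 * (p x * g' x ^ 2)) := by field_simp
    _ ≤ √(α * M ^ 2) * √(∫ t in a..b, M ^ 2 * (p t * g' t ^ 2)) := by gcongr
    _ = M ^ 2 * (√α * √(∫ t in a..b, p t * g' t ^ 2)) := by
        rw [intervalIntegral.integral_const_mul, sqrt_mul' _ (sq_nonneg M),
          sqrt_mul (sq_nonneg M), sqrt_sq hM₀]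
        ring

theorem abs_integral_mul_energy_le (h : IsSturmLiouvilleSolution p q w lam a b φ u)
    (hab : a ≤ b) (hp_pos : ∀ᵐ x ∂(volume.restrict (Set.Ioc a b)), 0 < p x)
    (hp : IntervalIntegrable (fun t => 1 / p t) volume a b)
    (hq : IntervalIntegrable q volume a b) {α M G : ℝ}
    (hM : ∀ x ∈ Set.Icc a b, ‖φ x‖ ≤ M)
    (hα : ∫ t in a..b, 1 / p t * ‖u t‖ ^ 2 ≤ α * M ^ 2) {g : ℝ → ℝ}
    (hg : ∀ x ∈ Set.Icc a b, |g x| ≤ G) :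
    |∫ t in a..b, g t * (q t * ‖φ t‖ ^ 2 + 1 / p t * ‖u t‖ ^ 2)|
      ≤ M ^ 2 * ((α + ∫ t in a..b, |q t|) * G) := by
  have hG : 0 ≤ G := (abs_nonneg _).trans (hg a (Set.left_mem_Icc.2 hab))
  have hqM : IntervalIntegrable (fun t => |q t| * M ^ 2) volume a b := hq.abs.mul_const _
  have hpu : IntervalIntegrable (fun t => 1 / p t * ‖u t‖ ^ 2) volume a b :=
    hp.mul_continuousOn h.isPrimitiveOn_quasiDeriv.continuousOn_norm_sq
  calc |∫ t in a..b, g t * (q t * ‖φ t‖ ^ 2 + 1 / p t * ‖u t‖ ^ 2)|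
      ≤ ∫ t in a..b, G * (|q t| * M ^ 2 + 1 / p t * ‖u t‖ ^ 2) := by
        rw [← norm_eq_abs]
        refine intervalIntegral.norm_integral_le_of_norm_le hab ?_ ((hqM.add hpu).const_mul G)
        refine (ae_restrict_iff' measurableSet_Ioc).1 ?_
        filter_upwards [hp_pos, ae_restrict_mem measurableSet_Ioc] with x hpx hx
        have hx' := Set.Ioc_subset_Icc_self hx
        rw [norm_mul, norm_eq_abs, norm_eq_abs]
        refine mul_le_mul (hg x hx') ?_ (abs_nonneg _) hG
        refine (abs_add_le _ _).trans ?_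
        rw [abs_mul, abs_of_nonneg (by positivity : 0 ≤ 1 / p x * ‖u x‖ ^ 2), abs_sq]
        gcongr
        exact hM x hx'
    _ = G * ((∫ t in a..b, |q t|) * M ^ 2 + ∫ t in a..b, 1 / p t * ‖u t‖ ^ 2) := by
        rw [intervalIntegral.integral_const_mul, intervalIntegral.integral_add hqM hpu,
          intervalIntegral.integral_mul_const]
    _ ≤ G * ((∫ t in a..b, |q t|) * M ^ 2 + α * M ^ 2) := by gcongr
    _ = M ^ 2 * ((α + ∫ t in a..b, |q t|) * G) := by ring

theorem abs_im_le_and_abs_re_le (h : IsSturmLiouvilleSolution p q w lam a b φ u)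
    (hab : a ≤ b) (hp_pos : ∀ᵐ x ∂(volume.restrict (Set.Ioc a b)), 0 < p x)
    (hp : IntervalIntegrable (fun t => 1 / p t) volume a b)
    (hq : IntervalIntegrable q volume a b) (hw : IntervalIntegrable w volume a b)
    {g g' : ℝ → ℝ} (hg : IsPrimitiveOn g g' a b) (hga : g a = 0) (hgb : g b = 0)
    (hg' : IntervalIntegrable (fun t => p t * g' t ^ 2) volume a b) {α M G c : ℝ}
    (hM_pos : 0 < M) (hM : ∀ x ∈ Set.Icc a b, ‖φ x‖ ≤ M)
    (hα : ∫ t in a..b, 1 / p t * ‖u t‖ ^ 2 ≤ α * M ^ 2)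
    (hg_bound : ∀ x ∈ Set.Icc a b, |g x| ≤ G) (hc : 0 < c)
    (hMc : M ^ 2 ≤ c * ∫ t in a..b, g t * (w t * ‖φ t‖ ^ 2)) :
    |lam.im| ≤ c * (√α * √(∫ t in a..b, p t * g' t ^ 2))
      ∧ |lam.re| ≤ c * (√α * √(∫ t in a..b, p t * g' t ^ 2) + (α + ∫ t in a..b, |q t|) * G) := by
  set T := ∫ t in a..b, g t * (w t * ‖φ t‖ ^ 2)
  set S := ∫ t in a..b, g t * (q t * ‖φ t‖ ^ 2 + 1 / p t * ‖u t‖ ^ 2)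
  set Z := ∫ t in a..b, u t * conj (φ t) * g' t
  have hα₀ : 0 ≤ α := nonneg_of_mul_nonneg_left
    ((intervalIntegral_one_div_mul_norm_sq_nonneg hab hp_pos u).trans hα) (pow_pos hM_pos 2)
  have hG₀ : 0 ≤ G := (abs_nonneg _).trans (hg_bound a (Set.left_mem_Icc.2 hab))
  have hq₀ : 0 ≤ ∫ t in a..b, |q t| :=
    intervalIntegral.integral_nonneg hab fun t _ => abs_nonneg (q t)
  have h_id : lam * T = S + Z := by
    have h_energy := h.energy_identity hp hq hw hg
    rw [hga, hgb, ofReal_zero, mul_zero, mul_zero, sub_zero] at h_energy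
    linear_combination h_energy
  have h_im : lam.im * T = Z.im := by simpa using congrArg Complex.im h_id
  have h_re : lam.re * T = S + Z.re := by simpa using congrArg Complex.re h_id
  have hZ : ‖Z‖ ≤ M ^ 2 * (√α * √(∫ t in a..b, p t * g' t ^ 2)) :=
    h.norm_integral_mul_conj_mul_le hab hp_pos hp hM_pos.le hM hα hg'
  have hS : |S| ≤ M ^ 2 * ((α + ∫ t in a..b, |q t|) * G) :=
    h.abs_integral_mul_energy_le hab hp_pos hp hq hM hα hg_bound
  constructor
  · refine abs_le_mul_of_le_mul (pow_pos hM_pos 2) hc (by positivity) hMc ?_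
    rw [h_im]
    exact (abs_im_le_norm Z).trans hZ
  · refine abs_le_mul_of_le_mul (pow_pos hM_pos 2) hc (by positivity) hMc ?_
    rw [h_re, mul_add, add_comm]
    exact (abs_add_le _ _).trans (add_le_add ((abs_re_le_norm Z).trans hZ) hS)

end IsSturmLiouvilleSolution

theorem mul_conj_sub_mul_conj_of_robin {l r : ℝ} {φa ua φb ub : ℂ} (ha : ua = l * φa)
    (hb : ub = r * φb) :
    ub * conj φb - ua * conj φa = ((r * ‖φb‖ ^ 2 - l * ‖φa‖ ^ 2 : ℝ) : ℂ) := by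
  rw [ha, hb, mul_assoc, mul_assoc, mul_conj, mul_conj, normSq_eq_norm_sq, normSq_eq_norm_sq]
  push_cast
  rfl

theorem mul_sub_mul_le_mul_max {l r x y : ℝ} (hx : 0 ≤ x) (hy : 0 ≤ y) :
    r * y - l * x ≤ (|l| + |r|) * max x y := by
  calc r * y - l * x = r * y + -l * x := by ring
    _ ≤ |r| * max x y + |l| * max x y :=
        add_le_add (mul_le_mul (le_abs_self r) (le_max_right x y) hy (abs_nonneg r))
          (mul_le_mul (neg_le_abs l) (le_max_left x y) hx (abs_nonneg l))
    _ = (|l| + |r|) * max x y := by ring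

theorem nonreal_eigenvalue_bounds_delta_separated_general {a b : ℝ} (hab : a ≤ b)
    {p q w : ℝ → ℝ} (hp_pos : ∀ᵐ x ∂(volume.restrict (Set.Ioc a b)), 0 < p x)
    (hp : IntervalIntegrable (fun x => 1 / p x) volume a b)
    (hq : IntervalIntegrable q volume a b) (hw : IntervalIntegrable w volume a b)
    (hw₀ : ∫ t in a..b, w t ≠ 0) {δ α β : ℝ}
    (hδ : 2 * (∫ t in a..b, |w t|) / |∫ t in a..b, w t| ≤ δ) (hβ : 0 ≤ β)
    (hα : α = β + ∫ t in a..b, |min (q t) 0|)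
    {g g' : ℝ → ℝ} (hg : IsPrimitiveOn g g' a b) (hga : g a = 0) (hgb : g b = 0)
    (hg' : IntervalIntegrable (fun t => p t * g' t ^ 2) volume a b)
    (hgw : ∀ᵐ x ∂(volume.restrict (Set.Ioc a b)), 0 ≤ g x * w x) {ε : ℝ} (hε : 0 < ε)
    (h_small : (volume.withDensity fun x => ENNReal.ofReal (1 / p x))
      {x | x ∈ Set.Icc a b ∧ p x * g x * w x < ε} ≤ ENNReal.ofReal (1 / (2 * α * δ ^ 2)))
    {lam : ℂ} (hlam : lam.im ≠ 0) {φ u : ℝ → ℂ}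
    (h : IsSturmLiouvilleSolution p q w lam a b φ u) (hne : ∃ x ∈ Set.Icc a b, φ x ≠ 0)
    {B : ℝ} (hB : u b * conj (φ b) - u a * conj (φ a) = B)
    (hBβ : B ≤ β * max (‖φ a‖ ^ 2) (‖φ b‖ ^ 2)) :
    |lam.im| ≤ 2 / ε * α ^ ((3 : ℝ) / 2) * δ ^ 2 * √(∫ t in a..b, p t * g' t ^ 2)
      ∧ |lam.re| ≤ 2 / ε * α * δ ^ 2 * (√α * √(∫ t in a..b, p t * g' t ^ 2)
          + (α + ∫ t in a..b, |q t|) * sSup ((fun x => |g x|) '' Set.Icc a b)) := by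
  have hφ_cont : ContinuousOn φ (Set.Icc a b) := Set.uIcc_of_le hab ▸ h.isPrimitiveOn.continuousOn
  have hg_cont : ContinuousOn g (Set.Icc a b) := Set.uIcc_of_le hab ▸ hg.continuousOn
  obtain ⟨x₀, hx₀, hφ₀, hM⟩ := exists_ne_zero_forall_norm_le isCompact_Icc hφ_cont hne
  have hM_pos : 0 < ‖φ x₀‖ := norm_pos_iff.2 hφ₀
  have hN : ∀ x ∈ Set.Icc a b, 0 ≤ ‖φ x‖ ^ 2 ∧ ‖φ x‖ ^ 2 ≤ ‖φ x₀‖ ^ 2 := fun x hx =>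
    ⟨by positivity, by gcongr; exact hM x hx⟩
  have hBM : B ≤ β * ‖φ x₀‖ ^ 2 := hBβ.trans <| mul_le_mul_of_nonneg_left
    (max_le (hN a (Set.left_mem_Icc.2 hab)).2 (hN b (Set.right_mem_Icc.2 hab)).2) hβ
  have hα₀ : 0 ≤ α := hα ▸ add_nonneg hβ
    (intervalIntegral.integral_nonneg hab fun t _ => abs_nonneg _)
  have hwφ := h.integral_weight_mul_norm_sq_eq_zero hp hq hw hlam hB
  have hK := h.integral_norm_quasiDeriv_sq_le hab hp hq hw hlam hB hBM hM
  rw [← hα] at hK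
  have hMJ := h.norm_sq_le_mul_integral_norm_sq hab hp_pos hp hw hw₀ hwφ hδ hx₀ hφ₀ hK
  have hD : 0 < α * δ ^ 2 := pos_of_mul_pos_left ((pow_pos hM_pos 2).trans_le hMJ)
    (intervalIntegral_one_div_mul_norm_sq_nonneg hab hp_pos φ)
  have hMT := le_mul_intervalIntegral_mul_of_withDensity_le hab hε (sq_nonneg ‖φ x₀‖) hD hp_pos
    hp hw hg.continuousOn hgw h.isPrimitiveOn.continuousOn_norm_sq hN hMJ
    (by rwa [← mul_assoc])
  have hg_bound : ∀ x ∈ Set.Icc a b, |g x| ≤ sSup ((fun x => |g x|) '' Set.Icc a b) :=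
    fun x hx => le_csSup (isCompact_Icc.image_of_continuousOn hg_cont.abs).bddAbove ⟨x, hx, rfl⟩
  obtain ⟨h_im, h_re⟩ := h.abs_im_le_and_abs_re_le hab hp_pos hp hq hw hg hga hgb hg' hM_pos hM
    hK hg_bound (c := 2 / ε * (α * δ ^ 2)) (by positivity) hMT
  have hα_rpow : α ^ ((3 : ℝ) / 2) = α * √α := by
    rw [sqrt_eq_rpow, show (3 : ℝ) / 2 = 1 + 1 / 2 by norm_num,
      rpow_add' hα₀ (by norm_num), rpow_one]
  refine ⟨h_im.trans_eq ?_, h_re.trans_eq ?_⟩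
  · rw [hα_rpow]; ring
  · ring

/-- Theorem 3.5 of the paper for separated self-adjoint boundary conditions:
bounds on the real and imaginary parts of non-real eigenvalues under the
additional assumption ∫ₐᵇ w ≠ 0. -/
theorem nonreal_eigenvalue_bounds_delta_separated
    (a b : ℝ) (hab : a < b) (p q w : ℝ → ℝ)
    (hpm : Measurable p) (hqm : Measurable q) (hwm : Measurable w)
    (hp_pos : ∀ᵐ x ∂(volume.restrict (Set.Ioc a b)), 0 < p x)
    (hp_int : IntegrableOn (fun x => 1 / p x) (Set.Ioc a b))
    (hq_int : IntegrableOn q (Set.Ioc a b))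
    (hw_int : IntegrableOn w (Set.Ioc a b))
    (hw_ne : ∀ᵐ x ∂(volume.restrict (Set.Ioc a b)), w x ≠ 0)
    (hw_pos : 0 < volume {x ∈ Set.Ioc a b | 0 < w x})
    (hw_neg : 0 < volume {x ∈ Set.Ioc a b | w x < 0})
    (hw0 : (∫ t in a..b, w t) ≠ 0)
    (δ : ℝ) (hδ : δ = 2 + 2 * (∫ t in a..b, |w t|) / |∫ t in a..b, w t|)
    (l r : ℝ) (α : ℝ)
    (hα : α = |l| + |r| + ∫ t in a..b, |min (q t) 0|)
    -- the comparison function g, absolutely continuous with a.e. derivative g'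
    (g g' : ℝ → ℝ) (hg'm : Measurable g')
    (hg'int : IntegrableOn g' (Set.Icc a b))
    (hgAC : ∀ x ∈ Set.Icc a b, g x = g a + ∫ t in a..x, g' t)
    (hga : g a = 0) (hgb : g b = 0)
    (hg'2 : IntegrableOn (fun t => p t * g' t ^ 2) (Set.Ioc a b))
    (hgw : ∀ᵐ x ∂(volume.restrict (Set.Ioc a b)), 0 < g x * w x)
    (ε : ℝ) (hε : 0 < ε)
    (hεcond : (volume.withDensity fun x => ENNReal.ofReal (1 / p x))
        {x | x ∈ Set.Icc a b ∧ p x * g x * w x < ε}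
          ≤ ENNReal.ofReal (1 / (2 * α * δ ^ 2))) :
    ∀ lam : ℂ, lam.im ≠ 0 →
      ∀ φ u : ℝ → ℂ,
        ContinuousOn φ (Set.Icc a b) → ContinuousOn u (Set.Icc a b) →
        (∀ x ∈ Set.Icc a b, φ x = φ a + ∫ t in a..x, u t / (p t : ℂ)) →
        (∀ x ∈ Set.Icc a b,
            u x = u a + ∫ t in a..x, ((q t : ℂ) - lam * (w t : ℂ)) * φ t) →
        (∃ x ∈ Set.Icc a b, φ x ≠ 0) →
        u a = (l : ℂ) * φ a → u b = (r : ℂ) * φ b →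
        |lam.im| ≤ 2 / ε * α ^ ((3 : ℝ) / 2) * δ ^ 2
            * Real.sqrt (∫ t in a..b, p t * g' t ^ 2)
          ∧ |lam.re| ≤ 2 / ε * α * δ ^ 2 *
              (Real.sqrt α * Real.sqrt (∫ t in a..b, p t * g' t ^ 2)
                + (α + ∫ t in a..b, |q t|)
                    * sSup ((fun x => |g x|) '' Set.Icc a b)) := by
  intro lam hlam φ u hφ_cont hu_cont hφ hu hne hua hub
  rw [← Set.uIcc_of_le hab.le] at hφ_cont hu_cont hφ hu hgAC
  have intervalIntegrable {f : ℝ → ℝ} (hf : IntegrableOn f (Set.Ioc a b)) :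
      IntervalIntegrable f volume a b :=
    (intervalIntegrable_iff_integrableOn_Ioc_of_le hab.le).2 hf
  have hp := intervalIntegrable hp_int
  have hq := intervalIntegrable hq_int
  have hw := intervalIntegrable hw_int
  have hg' := intervalIntegrable (hg'int.mono_set Set.Ioc_subset_Icc_self)
  exact nonreal_eigenvalue_bounds_delta_separated_general hab.le hp_pos hp hq hw hw0
    (by rw [hδ]; exact le_add_of_nonneg_left zero_le_two) (by positivity) hα ⟨hg', hgAC⟩ hga hgb
    (intervalIntegrable hg'2) (hgw.mono fun _ h => h.le) hε hεcond hlam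
    (.of_continuousOn hp hq hw hφ_cont hu_cont hφ hu) hne
    (mul_conj_sub_mul_conj_of_robin hua hub) (mul_sub_mul_le_mul_max (sq_nonneg _) (sq_nonneg _))
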